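/- arXiv:1707.07789 — 2 statements merged into one kernel-verified Lean document; each statement's English description precedes it below -/
import Mathlib

section
/- Let G be a finite abelian group and S ⊆ G \ {e}. Then the Cayley graph C(G, S) is not a directed strongly regular graph with parameters (n, k, μ, λ, t) satisfying 0 < t < k. -/
/-!
Let `A` be the adjacency matrix and `B = Aᵀ`. For an abelian group `A` is normal
(`cayleyAdj_normal`), and any normal `A` satisfying the DSRG equation has `t = 0` or
`t = k`.

Put `N = A - B`, `M = A + B`, `c = λ - μ`, and let `d = c² + 4(t - μ)` be the discriminant of the
quadratic satisfied by the nontrivial eigenvalues of `A`. Subtracting the DSRG equation from its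
transpose gives `N M = c N`; adding them and multiplying by `N` gives `N³ = d N`.
If `N = 0`, then `A` is symmetric and `t = k`.
Otherwise `d < 0`, because `N` is antisymmetric and so has purely imaginary eigenvalues. The
nontrivial eigenvalues of `A` are then all nonreal with real part `c / 2`, which says that
`P = n (M - c I) - (2k - c) J` vanishes: concretely `P³ = n² d P` with `P` symmetric and `d < 0`.
Thus the off-diagonal entries of `M` all equal one constant in `{0, 1, 2}`: for `0` the graph is
empty, for `2` it is symmetric, and for `1` it is a tournament, which has `t = 0`.

The sign arguments are carried out without eigenvalues, through positivity of `tr (X Xᵀ)`.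
-/

open Matrix

/-- The all-ones matrix. -/
def allOnes (V : Type*) [Fintype V] : Matrix V V ℤ :=
  Matrix.of fun _ _ => (1 : ℤ)

/-- `A` is the adjacency matrix of a directed strongly regular graph with
parameters `(n, k, μ, λ, t)`. -/
def IsDSRG {V : Type*} [Fintype V] [DecidableEq V] (A : Matrix V V ℤ)
    (n k μ lam t : ℤ) : Prop :=
  (Fintype.card V : ℤ) = n ∧
  (∀ i j, A i j = 0 ∨ A i j = 1) ∧
  (∀ i, A i i = 0) ∧
  A * allOnes V = k • allOnes V ∧
  allOnes V * A = k • allOnes V ∧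
  A * A = t • (1 : Matrix V V ℤ) + lam • A + μ • (allOnes V - 1 - A)

/-- The adjacency matrix of the Cayley graph `C(G, S)`. -/
def cayleyAdj (G : Type*) [Group G] [Fintype G] [DecidableEq G] (S : Finset G) :
    Matrix G G ℤ :=
  Matrix.of fun x y => if y * x⁻¹ ∈ S then (1 : ℤ) else 0

section Aux

variable {V : Type*} [Fintype V]

lemma trace_mul_transpose_nonneg (X : Matrix V V ℤ) : 0 ≤ (X * Xᵀ).trace := by
  simp only [Matrix.trace, Matrix.diag_apply, Matrix.mul_apply, Matrix.transpose_apply]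
  exact Finset.sum_nonneg fun i _ => Finset.sum_nonneg fun j _ => mul_self_nonneg _

lemma eq_zero_of_trace_mul_transpose (X : Matrix V V ℤ) (h : (X * Xᵀ).trace = 0) : X = 0 := by
  simp only [Matrix.trace, Matrix.diag_apply, Matrix.mul_apply, Matrix.transpose_apply] at h
  ext i j
  have hi := (Finset.sum_eq_zero_iff_of_nonneg
    fun i _ => Finset.sum_nonneg fun j _ => mul_self_nonneg (X i j)).mp h i (Finset.mem_univ i)
  rw [Finset.sum_eq_zero_iff_of_nonneg fun j _ => mul_self_nonneg (X i j)] at hi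
  exact mul_self_eq_zero.mp (hi j (Finset.mem_univ j))

/-- A symmetric matrix has real eigenvalues, so `X³ = e X` with `e < 0` forces `X = 0`. -/
lemma eq_zero_of_symm_cube (X : Matrix V V ℤ) (hX : Xᵀ = X) (e : ℤ) (he : e < 0)
    (h : X * (X * X) = e • X) : X = 0 := by
  have h4 : (X * X) * (X * X)ᵀ = e • (X * Xᵀ) := by
    rw [Matrix.transpose_mul, hX, Matrix.mul_assoc, h, Matrix.mul_smul]
  have h0 := trace_mul_transpose_nonneg (X * X)
  have h1 := trace_mul_transpose_nonneg X
  rw [h4, Matrix.trace_smul, smul_eq_mul] at h0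
  exact eq_zero_of_trace_mul_transpose X (by nlinarith)

/-- An antisymmetric matrix has purely imaginary eigenvalues, so `X³ = e X` and `X ≠ 0` force
`e < 0`. -/
lemma neg_of_antisymm_cube (X : Matrix V V ℤ) (hX : Xᵀ = -X) (e : ℤ) (hne : X ≠ 0)
    (h : X * (X * X) = e • X) : e < 0 := by
  by_contra! he
  have h4 : (X * X) * (X * X)ᵀ = -(e • (X * Xᵀ)) := by
    rw [Matrix.transpose_mul, hX, neg_mul_neg, Matrix.mul_assoc, h, Matrix.mul_smul,
      Matrix.mul_neg, smul_neg, neg_neg]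
  have h0 := trace_mul_transpose_nonneg (X * X)
  have h1 := trace_mul_transpose_nonneg X
  have h5 := h0
  rw [h4, Matrix.trace_neg, Matrix.trace_smul, smul_eq_mul] at h5
  have h6 : X * X = 0 := eq_zero_of_trace_mul_transpose _ (by
    rw [h4, Matrix.trace_neg, Matrix.trace_smul, smul_eq_mul]
    nlinarith)
  exact hne (eq_zero_of_trace_mul_transpose X (by rw [hX, Matrix.mul_neg, h6]; simp))

lemma allOnes_transpose : (allOnes V)ᵀ = allOnes V := rfl

lemma allOnes_mul_allOnes :
    allOnes V * allOnes V = (Fintype.card V : ℤ) • allOnes V := by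
  ext i j
  simp [allOnes, Matrix.mul_apply]

variable [DecidableEq V]

/-- The diagonal of the DSRG equation: `t` counts the arcs at `i` whose reverse is also an arc. -/
lemma IsDSRG.sum_mul_swap {A : Matrix V V ℤ} {n k μ lam t : ℤ} (h : IsDSRG A n k μ lam t)
    (i : V) : ∑ j, A i j * A j i = t := by
  obtain ⟨-, -, hd, -, -, hA⟩ := h
  have := congrFun (congrFun hA i) i
  simp only [Matrix.mul_apply, Matrix.add_apply, Matrix.sub_apply, Matrix.smul_apply,
    Matrix.one_apply_eq, allOnes, Matrix.of_apply, hd, smul_eq_mul] at this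
  linarith

lemma IsDSRG.sum_row {A : Matrix V V ℤ} {n k μ lam t : ℤ} (h : IsDSRG A n k μ lam t)
    (i : V) : ∑ j, A i j = k := by
  obtain ⟨-, -, -, hJ, -, -⟩ := h
  have := congrFun (congrFun hJ i) i
  simpa [Matrix.mul_apply, allOnes] using this

lemma IsDSRG.eq_of_symm {A : Matrix V V ℤ} {n k μ lam t : ℤ} (h : IsDSRG A n k μ lam t)
    (hs : Aᵀ = A) (i : V) : t = k := by
  rw [← h.sum_mul_swap i, ← h.sum_row i]
  refine Finset.sum_congr rfl fun j _ => ?_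
  have hj : A j i = A i j := congrFun (congrFun hs i) j
  rw [hj]
  rcases h.2.1 i j with h0 | h0 <;> simp [h0]

/-- If all off-diagonal entries of `A + Aᵀ` are equal, the graph is empty, a tournament or
complete, so `t` is `0` or `k`. -/
lemma IsDSRG.trivial_of_add_swap_const {A : Matrix V V ℤ} {n k μ lam t : ℤ}
    (h : IsDSRG A n k μ lam t) (a : ℤ) (ha : ∀ i j, i ≠ j → A i j + A j i = a) (i : V) :
    t = 0 ∨ t = k := by
  rw [← h.sum_mul_swap i, ← h.sum_row i]
  by_cases h1 : a = 1
  · left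
    refine Finset.sum_eq_zero fun j _ => ?_
    rcases eq_or_ne i j with rfl | hij
    · simp [h.2.2.1]
    · have := ha i j hij
      rcases h.2.1 i j with h0 | h0 <;> rcases h.2.1 j i with h2 | h2 <;> (simp [h0, h2]; try omega)
  · right
    refine Finset.sum_congr rfl fun j _ => ?_
    rcases eq_or_ne i j with rfl | hij
    · simp [h.2.2.1]
    · have := ha i j hij
      rcases h.2.1 i j with h0 | h0 <;> rcases h.2.1 j i with h2 | h2 <;> (simp [h0, h2]; try omega)

/-- A DSRG with normal adjacency matrix is degenerate: `t = 0` or `t = k`. -/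
lemma IsDSRG.trivial_of_normal {A : Matrix V V ℤ} {n k μ lam t : ℤ}
    (h : IsDSRG A n k μ lam t) (hnorm : A * Aᵀ = Aᵀ * A) (i₀ : V) : t = 0 ∨ t = k := by
  by_cases hsymm : Aᵀ = A
  · exact Or.inr (h.eq_of_symm hsymm i₀)
  have h' := h
  obtain ⟨hn, -, hdiag, hAJ, hJA, hAA⟩ := h'
  have hBB := congrArg Matrix.transpose hAA
  have hBJ := congrArg Matrix.transpose hJA
  have hJB := congrArg Matrix.transpose hAJ
  have hJJ := allOnes_mul_allOnes (V := V)
  have hJt := allOnes_transpose (V := V)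
  have hBt : Aᵀᵀ = A := Matrix.transpose_transpose A
  rw [hn] at hJJ
  simp only [Matrix.transpose_mul, Matrix.transpose_add, Matrix.transpose_sub,
    Matrix.transpose_smul, Matrix.transpose_one, hJt] at hBB hBJ hJB
  have hJij : ∀ i j, allOnes V i j = 1 := fun _ _ => rfl
  generalize allOnes V = J at *
  generalize hB : Aᵀ = B at *
  -- The quadratic equation has discriminant `d = c ^ 2 + 4 * (t - μ)` with `c = lam - μ`.
  have hNM : (A - B) * (A + B) = (lam - μ) • (A - B) := by
    simp only [sub_mul, mul_add, hAA, hBB, hnorm]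
    module
  have hMN : (A + B) * (A - B) = (lam - μ) • (A - B) := by
    simp only [add_mul, mul_sub, hAA, hBB, hnorm]
    module
  have hNJ : (A - B) * J = 0 := by rw [sub_mul, hAJ, hBJ, sub_self]
  have hJN : J * (A - B) = 0 := by rw [mul_sub, hJA, hJB, sub_self]
  have hsq : (A + B) * (A + B) + (A - B) * (A - B)
      = (4 * (t - μ)) • (1 : Matrix V V ℤ) + (2 * (lam - μ)) • (A + B) + (4 * μ) • J := by
    simp only [add_mul, mul_add, sub_mul, mul_sub, hAA, hBB, hnorm]
    module
  have hMJ : (A + B) * J = (2 * k) • J := by rw [add_mul, hAJ, hBJ]; module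
  have hJM : J * (A + B) = (2 * k) • J := by rw [mul_add, hJA, hJB]; module
  have hNt : (A - B)ᵀ = -(A - B) := by
    rw [Matrix.transpose_sub, hB, hBt, neg_sub]
  have hMt : (A + B)ᵀ = A + B := by
    rw [Matrix.transpose_add, hB, hBt, add_comm]
  have hN0 : A - B ≠ 0 := fun h0 => hsymm (sub_eq_zero.mp h0).symm
  have hMij : ∀ i j, (A + B) i j = A i j + A j i := fun i j => by rw [← hB]; rfl
  generalize A - B = N at *
  generalize A + B = M at *
  have hN3 : N * (N * N)
      = ((lam - μ) ^ 2 + 4 * (t - μ)) • N := by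
    have h1 : N * (N * N) = N * ((4 * (t - μ)) • (1 : Matrix V V ℤ) + (2 * (lam - μ)) • M
        + (4 * μ) • J - M * M) := by rw [← hsq]; congr 1; abel
    rw [h1]
    simp only [mul_sub, mul_add, mul_smul_comm, mul_one, ← mul_assoc, hNM, hNJ, smul_mul_assoc]
    module
  have hd := neg_of_antisymm_cube N hNt _ hN0 hN3
  have hnpos : 0 < n := by
    rw [← hn]
    exact_mod_cast Fintype.card_pos_iff.mpr ⟨i₀⟩
  generalize hc : lam - μ = c at *
  -- `P / n` is the compression of `Q = M - c` to the orthogonal complement of the all-ones vector;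
  -- the factor `n` keeps the entries integral.
  obtain ⟨Q, hQ⟩ : ∃ Q, Q = M - c • (1 : Matrix V V ℤ) := ⟨_, rfl⟩
  obtain ⟨P, hP⟩ : ∃ P, P = n • Q - (2 * k - c) • J := ⟨_, rfl⟩
  have hJQ : J * Q = (2 * k - c) • J := by
    rw [hQ, mul_sub, hJM, mul_smul_comm, mul_one]; module
  have hQJ : Q * J = (2 * k - c) • J := by
    rw [hQ, sub_mul, hMJ, smul_mul_assoc, one_mul]; module
  have hQN : Q * N = 0 := by
    rw [hQ, sub_mul, hMN, smul_mul_assoc, one_mul, sub_self]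
  have hPJ : P * J = 0 := by
    rw [hP, sub_mul, smul_mul_assoc, smul_mul_assoc, hQJ, hJJ]; module
  have hPN : P * N = 0 := by
    rw [hP, sub_mul, smul_mul_assoc, smul_mul_assoc, hQN, hJN]; simp
  have hQQ : Q * Q = (c ^ 2 + 4 * (t - μ)) • (1 : Matrix V V ℤ) + (4 * μ) • J - N * N := by
    have h1 : M * M = (4 * (t - μ)) • (1 : Matrix V V ℤ) + (2 * c) • M + (4 * μ) • J - N * N := by
      rw [← hsq]; abel
    rw [hQ]
    simp only [sub_mul, mul_sub, smul_mul_assoc, mul_smul_comm, one_mul, mul_one, h1]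
    module
  have hPX : ∀ X, P * (P * X) = n • (P * (Q * X)) := fun X => by
    have h1 : P * P = n • (P * Q) := by
      nth_rewrite 2 [hP]
      rw [mul_sub, mul_smul_comm, mul_smul_comm, hPJ, smul_zero, sub_zero]
    rw [← mul_assoc, h1, smul_mul_assoc, mul_assoc]
  have hPP : P * P = n • (P * Q) := by simpa using hPX 1
  have hP3 : P * (P * P) = (n ^ 2 * (c ^ 2 + 4 * (t - μ))) • P := by
    rw [hPP, mul_smul_comm, hPX, hQQ]
    simp only [mul_sub, mul_add, mul_smul_comm, mul_one, hPJ, ← mul_assoc, hPN, zero_mul]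
    module
  have hPt : Pᵀ = P := by
    rw [hP, hQ]
    simp only [Matrix.transpose_sub, Matrix.transpose_smul, Matrix.transpose_one, hMt, hJt]
  have hP0 := eq_zero_of_symm_cube P hPt _ (mul_neg_of_pos_of_neg (by positivity) hd) hP3
  have hent : ∀ i j, i ≠ j → n * (A i j + A j i) = 2 * k - c := fun i j hij => by
    have h1 : P i j = 0 := by rw [hP0]; rfl
    rw [hP, hQ] at h1
    simp only [Matrix.sub_apply, Matrix.smul_apply, Matrix.one_apply_ne hij, hJij, hMij,
      smul_eq_mul] at h1
    linarith
  refine h.trivial_of_add_swap_const ((2 * k - c) / n) (fun i j hij => ?_) i₀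
  rw [← hent i j hij, Int.mul_ediv_cancel_left _ hnpos.ne']

end Aux

/-- In an abelian group `z ↦ x * y * z⁻¹` exchanges common out-neighbours and common in-neighbours
of `x` and `y`. -/
lemma cayleyAdj_normal {G : Type*} [CommGroup G] [Fintype G] [DecidableEq G] (S : Finset G) :
    cayleyAdj G S * (cayleyAdj G S)ᵀ = (cayleyAdj G S)ᵀ * cayleyAdj G S := by
  ext x y
  simp only [Matrix.mul_apply, Matrix.transpose_apply, cayleyAdj, Matrix.of_apply]
  refine Fintype.sum_equiv (Equiv.divLeft (x * y)) _ _ fun z => ?_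
  have h1 : x * (Equiv.divLeft (x * y) z)⁻¹ = z * y⁻¹ := by
    rw [Equiv.divLeft_apply, inv_div, div_eq_mul_inv, mul_inv, mul_left_comm,
      mul_inv_cancel_left]
  have h2 : y * (Equiv.divLeft (x * y) z)⁻¹ = z * x⁻¹ := by
    rw [Equiv.divLeft_apply, inv_div, div_eq_mul_inv, mul_inv, mul_left_comm, mul_comm x⁻¹,
      mul_inv_cancel_left]
  rw [h1, h2, mul_comm]

/-- If `G` is a finite abelian group and `S ⊆ G \ {e}`, then the Cayley graph
`C(G, S)` is not a directed strongly regular graph with parameters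
`(n, k, μ, λ, t)`, `0 < t < k`. -/
theorem cayley_abelian_not_dsrg {G : Type*} [CommGroup G] [Fintype G] [DecidableEq G]
    (S : Finset G) (hS : (1 : G) ∉ S)
    (n k μ lam t : ℤ) (ht : 0 < t) (htk : t < k) :
    ¬ IsDSRG (cayleyAdj G S) n k μ lam t := by
  intro h
  rcases h.trivial_of_normal (cayleyAdj_normal S) 1 with h0 | h0 <;> omega
end

section
/- Let D_n = ⟨x, a | xⁿ = a² = e, ax = x⁻¹a⟩ be the dihedral group of order 2n, with cyclic subgroup C_n = ⟨x⟩, and let X ⊆ C_n \ {e}. The Cayley graph C(D_n, X ∪ Xa) is a directed strongly regular graph with parameters (2n, 2|X|, μ, λ, t) if and only if t = μ and, in the group ring ℤ[C_n], (X̄ + X̄⁽⁻¹⁾)·X̄ = (λ − μ)·X̄ + μ·C̄_n. -/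
/-!
Let `f` be the indicator function of `X` and let
`P d = ∑ u, (f u + f (-u)) * f (d - u)` (`convSum`), the coefficient at `d` of
`(X̄ + X̄⁽⁻¹⁾) * X̄` (`coeff_cycBar_mul`).  Since `r i ∈ X ∪ Xa ↔ i ∈ X` and
`sr i ∈ X ∪ Xa ↔ -i ∈ X`, every entry of the square of the adjacency matrix is a value
of `P`: splitting the sum over `DihedralGroup n` into rotations and reflections gives
`A² (r i) (r j) = A² (sr i) (r j) = P (j - i)` and
`A² (r i) (sr j) = A² (sr i) (sr j) = P (i - j)`, while `A` itself has the same entries with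
`f` in place of `P`.  The four blocks of the matrix equation therefore all read
`P d = (λ - μ) * f d + μ`, except that the two diagonal blocks carry the extra term `t - μ`
at `d = 0`; comparing with the off-diagonal blocks forces `t = μ`.
The remaining conditions of a DSRG hold for every such Cayley graph.
-/

open Matrix

/-- The connection set `X ∪ Ya ⊆ D_n`, where `X, Y ⊆ C_n = ⟨x⟩` are identified
with subsets of `ZMod n` (the exponent of `x = r 1`), and `a = sr 0`. -/
def dihedralS (n : ℕ) (X Y : Finset (ZMod n)) : Finset (DihedralGroup n) :=
  X.image DihedralGroup.r ∪
    Y.image fun i => DihedralGroup.r i * DihedralGroup.sr 0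

/-- `Z̄ = ∑_{g ∈ Z} g` in the group ring `ℤ[C_n]` of the cyclic group `C_n`,
realised as `AddMonoidAlgebra ℤ (ZMod n)`. -/
noncomputable def cycBar (n : ℕ) (Z : Finset (ZMod n)) : AddMonoidAlgebra ℤ (ZMod n) :=
  ∑ i ∈ Z, AddMonoidAlgebra.single i 1

/-- The indicator function of `X`, with integer values. -/
def ind {n : ℕ} (X : Finset (ZMod n)) (i : ZMod n) : ℤ := if i ∈ X then 1 else 0

/-- The convolution `(f + f ∘ neg) * f` of the indicator function `f` of `X`. -/
def convSum {n : ℕ} [NeZero n] (X : Finset (ZMod n)) (d : ZMod n) : ℤ :=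
  ∑ u, (ind X u + ind X (-u)) * ind X (d - u)

lemma sum_dihedral {n : ℕ} [NeZero n] (g : DihedralGroup n → ℤ) :
    ∑ x, g x = ∑ k, (g (.r k) + g (.sr k)) := by
  rw [← DihedralGroup.equivSum.symm.sum_comp g, Fintype.sum_sum_type, Finset.sum_add_distrib]
  rfl

lemma r_mem_dihedralS {n : ℕ} (X : Finset (ZMod n)) (i : ZMod n) :
    DihedralGroup.r i ∈ dihedralS n X X ↔ i ∈ X := by
  simp [dihedralS]

lemma sr_mem_dihedralS {n : ℕ} (X : Finset (ZMod n)) (i : ZMod n) :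
    DihedralGroup.sr i ∈ dihedralS n X X ↔ -i ∈ X := by
  simp [dihedralS, neg_eq_iff_eq_neg]

section entries
variable {n : ℕ} [NeZero n] (X : Finset (ZMod n)) (i j : ZMod n)

lemma adj_r_r : cayleyAdj _ (dihedralS n X X) (.r i) (.r j) = ind X (j - i) := by
  simp [cayleyAdj, ind, r_mem_dihedralS, sub_eq_add_neg]

lemma adj_r_sr : cayleyAdj _ (dihedralS n X X) (.r i) (.sr j) = ind X (i - j) := by
  simp only [cayleyAdj, ind, of_apply, DihedralGroup.inv_r, DihedralGroup.sr_mul_r,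
    sr_mem_dihedralS, neg_add, neg_neg, sub_eq_add_neg, add_comm]

lemma adj_sr_r : cayleyAdj _ (dihedralS n X X) (.sr i) (.r j) = ind X (j - i) := by
  simp [cayleyAdj, ind, sr_mem_dihedralS]

lemma adj_sr_sr : cayleyAdj _ (dihedralS n X X) (.sr i) (.sr j) = ind X (i - j) := by
  simp [cayleyAdj, ind, r_mem_dihedralS]

/-- Substitution `k = i + u` in the sum over the midpoints of paths ending in a rotation. -/
lemma sum_conv_r :
    ∑ k, (ind X (k - i) + ind X (i - k)) * ind X (j - k) = convSum X (j - i) := by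
  rw [convSum, ← Equiv.sum_comp (Equiv.addLeft i) fun k =>
    (ind X (k - i) + ind X (i - k)) * ind X (j - k)]
  refine Finset.sum_congr rfl fun u _ => ?_
  rw [show Equiv.addLeft i u = i + u from rfl, show i + u - i = u by abel,
    show i - (i + u) = -u by abel, show j - (i + u) = j - i - u by abel]

/-- Substitution `k = i - u` in the sum over the midpoints of paths ending in a reflection. -/
lemma sum_conv_sr :
    ∑ k, (ind X (k - i) + ind X (i - k)) * ind X (k - j) = convSum X (i - j) := by
  rw [convSum, ← (Equiv.subLeft i).sum_comp]
  refine Finset.sum_congr rfl fun u _ => ?_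
  rw [Equiv.subLeft_apply, show i - u - i = -u by abel, show i - (i - u) = u by abel,
    show i - u - j = i - j - u by abel, add_comm (ind X (-u))]

lemma sq_r_r : (cayleyAdj _ (dihedralS n X X) * cayleyAdj _ (dihedralS n X X)) (.r i) (.r j)
    = convSum X (j - i) := by
  simp only [mul_apply, sum_dihedral, adj_r_r, adj_r_sr, adj_sr_r, ← add_mul, sum_conv_r]

lemma sq_r_sr : (cayleyAdj _ (dihedralS n X X) * cayleyAdj _ (dihedralS n X X)) (.r i) (.sr j)
    = convSum X (i - j) := by
  simp only [mul_apply, sum_dihedral, adj_r_r, adj_r_sr, adj_sr_sr, ← add_mul, sum_conv_sr]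

lemma sq_sr_r : (cayleyAdj _ (dihedralS n X X) * cayleyAdj _ (dihedralS n X X)) (.sr i) (.r j)
    = convSum X (j - i) := by
  simp only [mul_apply, sum_dihedral, adj_r_r, adj_sr_sr, adj_sr_r, ← add_mul, sum_conv_r]

lemma sq_sr_sr : (cayleyAdj _ (dihedralS n X X) * cayleyAdj _ (dihedralS n X X)) (.sr i) (.sr j)
    = convSum X (i - j) := by
  simp only [mul_apply, sum_dihedral, adj_sr_sr, adj_r_sr, adj_sr_r, ← add_mul, sum_conv_sr]

end entries

lemma sum_ind {n : ℕ} [NeZero n] (X : Finset (ZMod n)) : ∑ k, ind X k = X.card := by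
  simp [ind]

lemma sum_ind_sub_left {n : ℕ} [NeZero n] (X : Finset (ZMod n)) (i : ZMod n) :
    ∑ k, ind X (i - k) = X.card := by
  rw [← sum_ind]; exact (Equiv.subLeft i).sum_comp (ind X)

lemma sum_ind_sub_right {n : ℕ} [NeZero n] (X : Finset (ZMod n)) (i : ZMod n) :
    ∑ k, ind X (k - i) = X.card := by
  rw [← sum_ind]; exact (Equiv.subRight i).sum_comp (ind X)

lemma coeff_cycBar {n : ℕ} (X : Finset (ZMod n)) (d : ZMod n) :
    (cycBar n X).coeff d = ind X d := by
  simp [cycBar, ind, Finsupp.single_apply]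

lemma ind_image_neg {n : ℕ} (X : Finset (ZMod n)) (i : ZMod n) :
    ind (X.image fun i => -i) i = ind X (-i) := by
  simp [ind, neg_eq_iff_eq_neg]

lemma coeff_mul_eq_sum {n : ℕ} [NeZero n] (a b : AddMonoidAlgebra ℤ (ZMod n)) (d : ZMod n) :
    (a * b).coeff d = ∑ u, a.coeff u * b.coeff (d - u) := by
  rw [AddMonoidAlgebra.coeff_mul, Finsupp.sum_fintype _ _ (by simp)]
  refine Finset.sum_congr rfl fun u _ => ?_
  rw [Finsupp.sum_fintype _ _ (by simp)]
  simp [← eq_sub_iff_add_eq']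

lemma coeff_cycBar_mul {n : ℕ} [NeZero n] (X : Finset (ZMod n)) (d : ZMod n) :
    ((cycBar n X + cycBar n (X.image (fun i => -i))) * cycBar n X).coeff d = convSum X d := by
  simp [coeff_mul_eq_sum, coeff_cycBar, ind_image_neg, convSum]

/-- The group ring equation, coefficient by coefficient. -/
lemma cycBar_eq_iff {n : ℕ} [NeZero n] (X : Finset (ZMod n)) (μ lam : ℤ) :
    (cycBar n X + cycBar n (X.image (fun i => -i))) * cycBar n X =
        (lam - μ) • cycBar n X + μ • cycBar n Finset.univ ↔
      ∀ d, convSum X d = (lam - μ) * ind X d + μ := by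
  rw [← AddMonoidAlgebra.coeff_inj, DFunLike.ext_iff]
  refine forall_congr' fun d => ?_
  rw [coeff_cycBar_mul]
  simp [-zsmul_eq_mul, coeff_cycBar, show ind Finset.univ d = 1 by simp [ind]]

/-- The Cayley graph `C(D_n, X ∪ Xa)` with `X ⊆ C_n \ {e}` is a DSRG with
parameters `(2n, 2|X|, μ, λ, t)` iff `t = μ` and, in `ℤ[C_n]`,
`(X̄ + X̄⁽⁻¹⁾)·X̄ = (λ−μ)·X̄ + μ·C̄_n`. -/
theorem dihedral_cayley_XXa_dsrg_iff (n : ℕ) [NeZero n] (X : Finset (ZMod n))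
    (hX : (0 : ZMod n) ∉ X) (μ lam t : ℤ) :
    IsDSRG (cayleyAdj (DihedralGroup n) (dihedralS n X X))
        (2 * n) (2 * (X.card : ℤ)) μ lam t ↔
      (t = μ ∧
        (cycBar n X + cycBar n (X.image (fun i => -i))) * cycBar n X =
          (lam - μ) • cycBar n X + μ • cycBar n Finset.univ) := by
  have h_ind0 : ind X 0 = 0 := by simp [ind, hX]
  rw [cycBar_eq_iff]
  constructor
  · rintro ⟨-, -, -, -, -, hsq⟩
    -- An off-diagonal block has no term in `t`, so it gives the equation at every `d`.
    have h_off : ∀ d, convSum X d = (lam - μ) * ind X d + μ := fun d => by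
      have h := congrFun₂ hsq (.sr 0) (.r d)
      rw [sq_sr_r] at h
      simp only [adj_sr_r, Matrix.add_apply, Matrix.sub_apply, Matrix.smul_apply, one_apply,
        allOnes, of_apply, smul_eq_mul, reduceCtorEq, if_false, sub_zero] at h
      linear_combination h
    refine ⟨?_, h_off⟩
    -- A diagonal entry then reads `μ = t`, because `0 ∉ X`.
    have h := congrFun₂ hsq (.r 0) (.r 0)
    rw [sq_r_r] at h
    simp only [adj_r_r, sub_self, h_off, h_ind0, Matrix.add_apply, Matrix.sub_apply,
      Matrix.smul_apply, one_apply_eq, allOnes, of_apply, smul_eq_mul] at h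
    linear_combination -h
  · rintro ⟨rfl, h⟩
    refine ⟨?_, ?_, ?_, ?_, ?_, ?_⟩
    · simp [DihedralGroup.card]
    · intro x y
      simp only [cayleyAdj, of_apply]
      split_ifs <;> simp
    · rintro (i | i)
      · simp [adj_r_r, h_ind0]
      · simp [adj_sr_sr, h_ind0]
    · ext x y
      rcases x with i | i <;>
        simp [mul_apply, sum_dihedral, allOnes, adj_r_r, adj_r_sr, adj_sr_r, adj_sr_sr,
          Finset.sum_add_distrib, sum_ind_sub_left, sum_ind_sub_right, two_mul]
    · ext x y
      rcases y with i | i <;>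
        simp [mul_apply, sum_dihedral, allOnes, adj_r_r, adj_r_sr, adj_sr_r, adj_sr_sr,
          Finset.sum_add_distrib, sum_ind_sub_left, sum_ind_sub_right, two_mul]
    · ext x y
      rcases x with i | i <;> rcases y with j | j <;>
        simp only [sq_r_r, sq_r_sr, sq_sr_r, sq_sr_sr, h, Matrix.add_apply, Matrix.sub_apply,
          Matrix.smul_apply, adj_r_r, adj_r_sr, adj_sr_r, adj_sr_sr, allOnes, of_apply,
          smul_eq_mul] <;>
        ring
end
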